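/- arXiv:1004.4530 — 2 statements merged into one kernel-verified Lean document; each statement's English description precedes it below -/
import Mathlib

section
/- For every finite set 𝒮, every probability distribution P_S on 𝒮, and every real ℓ ≥ 0, there exist finite sets 𝒰_n, 𝒳_n, 𝒴_n and a sequence {(φ_n*, ψ_n*)}_{n≥1} of encoder/decoder pairs that asymptotically realizes a (2,2)-threshold scheme with correlation level ℓ and moreover satisfies: limsup_{n→∞} (1/n) log₂|𝒳_n| ≤ H(S)+ℓ, limsup_{n→∞} (1/n) log₂|𝒴_n| ≤ H(S)+ℓ, limsup_{n→∞} (1/n) log₂|𝒰_n| ≤ H(S)+ℓ, liminf_{n→∞} min{ −(1/n) log₂ P_n^X , −(1/n) log₂ P_n^Y } ≥ ℓ, and I(S^n;X_n) = I(S^n;Y_n) = 0 for all n ≥ 1. -/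
open Finset Filter Real
open scoped BigOperators

noncomputable section

/-- `p` is a probability mass function on a finite type. -/
def IsPMF {α : Type*} [Fintype α] (p : α → ℝ) : Prop :=
  (∀ a, 0 ≤ p a) ∧ ∑ a, p a = 1

open scoped Classical in
/-- The distribution (pushforward pmf) of a random variable `X`
defined on a finite sample space carrying the pmf `p`. -/
def distOf {Ω α : Type*} [Fintype Ω] (p : Ω → ℝ) (X : Ω → α) (x : α) : ℝ :=
  ∑ ω ∈ Finset.univ.filter fun ω => X ω = x, p ω

/-- Base-2 Shannon entropy of a pmf on a finite type
(the convention `0 · log₂ 0 = 0` holds since `Real.logb 2 0 = 0`). -/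
def ent {α : Type*} [Fintype α] (q : α → ℝ) : ℝ :=
  -∑ x, q x * Real.logb 2 (q x)

/-- Base-2 entropy `H(X)` of a random variable `X` under pmf `p`. -/
def entRV {Ω α : Type*} [Fintype Ω] [Fintype α] (p : Ω → ℝ) (X : Ω → α) : ℝ :=
  ent (distOf p X)

/-- Base-2 conditional entropy `H(X|Y) = H(X,Y) − H(Y)`. -/
def condEnt {Ω α β : Type*} [Fintype Ω] [Fintype α] [Fintype β]
    (p : Ω → ℝ) (X : Ω → α) (Y : Ω → β) : ℝ :=
  entRV p (fun ω => (X ω, Y ω)) - entRV p Y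

/-- Base-2 mutual information `I(X;Y) = H(X) + H(Y) − H(X,Y)`. -/
def MI {Ω α β : Type*} [Fintype Ω] [Fintype α] [Fintype β]
    (p : Ω → ℝ) (X : Ω → α) (Y : Ω → β) : ℝ :=
  entRV p X + entRV p Y - entRV p (fun ω => (X ω, Y ω))

/-- `X` and `Y` are independent random variables under the pmf `p`. -/
def IndepRV {Ω α β : Type*} [Fintype Ω] (p : Ω → ℝ) (X : Ω → α) (Y : Ω → β) : Prop :=
  ∀ a b, distOf p (fun ω => (X ω, Y ω)) (a, b) = distOf p X a * distOf p Y b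

/-- An encoder/decoder sequence for the asymptotic (2,2)-threshold setup:
for each `n`, a finite nonempty randomness alphabet `U n`, finite share
alphabets `X n` and `Y n`, a deterministic encoder `enc n` mapping the `n`
secrets and the uniform random number to the two shares, and a decoder
`dec n` (`none` plays the role of the detection symbol `⊥`). -/
structure Scheme22 (𝒮 : Type) where
  U : ℕ → Type
  X : ℕ → Type
  Y : ℕ → Type
  fU : ∀ n, Fintype (U n)
  fX : ∀ n, Fintype (X n)
  fY : ∀ n, Fintype (Y n)
  neU : ∀ n, Nonempty (U n)
  enc : ∀ n, (Fin n → 𝒮) → U n → X n × Y n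
  dec : ∀ n, X n × Y n → Option (Fin n → 𝒮)

attribute [instance] Scheme22.fU Scheme22.fX Scheme22.fY Scheme22.neU

variable {𝒮 : Type} [Fintype 𝒮]

/-- The joint pmf of `(Sⁿ, Uₙ)` on `(Fin n → 𝒮) × C.U n`:
`Sⁿ` is i.i.d. with marginal `PS`, and `Uₙ` is uniform and independent of `Sⁿ`. -/
def jp (C : Scheme22 𝒮) (PS : 𝒮 → ℝ) (n : ℕ) : (Fin n → 𝒮) × C.U n → ℝ :=
  fun ω => (∏ i, PS (ω.1 i)) / (Fintype.card (C.U n) : ℝ)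

/-- The secret `Sⁿ` as a random variable. -/
def Sn (C : Scheme22 𝒮) (n : ℕ) : (Fin n → 𝒮) × C.U n → (Fin n → 𝒮) := Prod.fst

/-- The share `Xₙ` as a random variable. -/
def Xn (C : Scheme22 𝒮) (n : ℕ) : (Fin n → 𝒮) × C.U n → C.X n :=
  fun ω => (C.enc n ω.1 ω.2).1

/-- The share `Yₙ` as a random variable. -/
def Yn (C : Scheme22 𝒮) (n : ℕ) : (Fin n → 𝒮) × C.U n → C.Y n :=
  fun ω => (C.enc n ω.1 ω.2).2

open scoped Classical in
/-- The acceptance region `𝒜ₙ` of the decoder. -/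
def AccRegion (C : Scheme22 𝒮) (n : ℕ) : Finset (C.X n × C.Y n) :=
  Finset.univ.filter fun xy => C.dec n xy ≠ none

open scoped Classical in
/-- The decoding error probability `Pₙᵉ = Pr{ψₙ(φₙ(Sⁿ,Uₙ)) ≠ Sⁿ}`. -/
def Pe (C : Scheme22 𝒮) (PS : 𝒮 → ℝ) (n : ℕ) : ℝ :=
  ∑ ω ∈ Finset.univ.filter
      (fun ω : (Fin n → 𝒮) × C.U n => C.dec n (C.enc n ω.1 ω.2) ≠ some ω.1),
    jp C PS n ω

/-- `Pₙˣ`: the maximal success probability of impersonating participant 1,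
the supremum over all forging distributions `Q` on `𝒳ₙ`. -/
def PimpX (C : Scheme22 𝒮) (PS : 𝒮 → ℝ) (n : ℕ) : ℝ :=
  ⨆ Q : {Q : C.X n → ℝ // IsPMF Q},
    ∑ xy ∈ AccRegion C n, Q.1 xy.1 * distOf (jp C PS n) (Yn C n) xy.2

/-- `Pₙʸ`: the maximal success probability of impersonating participant 2. -/
def PimpY (C : Scheme22 𝒮) (PS : 𝒮 → ℝ) (n : ℕ) : ℝ :=
  ⨆ Q : {Q : C.Y n → ℝ // IsPMF Q},
    ∑ xy ∈ AccRegion C n, distOf (jp C PS n) (Xn C n) xy.1 * Q.1 xy.2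

/-- The sequence `{(φₙ,ψₙ)}` asymptotically realizes a (2,2)-threshold scheme
with correlation level `ℓ`: vanishing decoding error probability, vanishing
normalized leakage `I(Sⁿ;Xₙ)/n` and `I(Sⁿ;Yₙ)/n`, and `I(Xₙ;Yₙ)/n → ℓ`. -/
def Realizes (C : Scheme22 𝒮) (PS : 𝒮 → ℝ) (ℓ : ℝ) : Prop :=
  Tendsto (fun n => Pe C PS n) atTop (nhds 0) ∧
  Tendsto (fun n => MI (jp C PS n) (Sn C n) (Xn C n) / (n : ℝ)) atTop (nhds 0) ∧
  Tendsto (fun n => MI (jp C PS n) (Sn C n) (Yn C n) / (n : ℝ)) atTop (nhds 0) ∧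
  Tendsto (fun n => MI (jp C PS n) (Xn C n) (Yn C n) / (n : ℝ)) atTop (nhds ℓ)

/-!
Compress `Sⁿ` to a message `M` with a fixed-length code on the typical set. Draw a one-time pad `V`
of the size of `M` and a key `W` of rate `ℓ`, and share `X = (V, W)`, `Y = (V + M, W)`. Each share
alone is uniform and independent of the secret. The decoder accepts exactly when the two keys agree,
so any forgery succeeds with probability `1 / |W|`. Finally `I(X; Y) = log |M| + log |W| - H(M)`:
since `log |M|` and `H(M)` are both `n H(S) + o(n)`, only the key rate survives in the limit.
-/

section ProbabilityMassFunctions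

variable {Ω α β : Type*} [Fintype Ω] {p : Ω → ℝ}

lemma IsPMF.nonempty (hp : IsPMF p) : Nonempty Ω := by
  by_contra hΩ
  rw [not_nonempty_iff] at hΩ
  simpa using hp.2

lemma IsPMF.le_one (hp : IsPMF p) (ω : Ω) : p ω ≤ 1 :=
  hp.2 ▸ Finset.single_le_sum (fun i _ => hp.1 i) (Finset.mem_univ ω)

lemma IsPMF.sum_le_one (hp : IsPMF p) (T : Finset Ω) : ∑ ω ∈ T, p ω ≤ 1 :=
  hp.2 ▸ Finset.sum_le_univ_sum_of_nonneg hp.1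

lemma IsPMF.pi {ι : Type*} {α : ι → Type*} [Fintype ι] [DecidableEq ι] [∀ i, Fintype (α i)]
    {p : ∀ i, α i → ℝ} (hp : ∀ i, IsPMF (p i)) :
    IsPMF fun s : ∀ i, α i => ∏ i, p i (s i) := by
  refine ⟨fun s => Finset.prod_nonneg fun i _ => (hp i).1 _, ?_⟩
  simp only [← Fintype.prod_sum, (hp _).2, Finset.prod_const_one]

lemma distOf_apply [DecidableEq α] (p : Ω → ℝ) (X : Ω → α) (x : α) :
    distOf p X x = ∑ ω, if X ω = x then p ω else 0 := by
  rw [distOf, Finset.sum_filter]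
  congr! 2

lemma sum_distOf [Fintype α] (p : Ω → ℝ) (X : Ω → α) : ∑ x, distOf p X x = ∑ ω, p ω := by
  classical exact Finset.sum_fiberwise _ X p

lemma isPMF_distOf [Fintype α] (hp : IsPMF p) (X : Ω → α) : IsPMF (distOf p X) :=
  ⟨fun _ => Finset.sum_nonneg fun ω _ => hp.1 ω, (sum_distOf p X).trans hp.2⟩

lemma distOf_comp_of_injective (p : Ω → ℝ) (X : Ω → α) {e : α → β} (he : e.Injective) (x : α) :
    distOf p (fun ω => e (X ω)) (e x) = distOf p X x := by
  classical simp only [distOf_apply, he.eq_iff]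

lemma distOf_eq_zero_of_notMem_range (p : Ω → ℝ) {X : Ω → α} {x : α} (hx : x ∉ Set.range X) :
    distOf p X x = 0 := by
  classical
  rw [distOf_apply]
  exact Finset.sum_eq_zero fun ω _ => if_neg fun hω => hx ⟨ω, hω⟩

lemma sum_distOf_prodMk_left [Fintype α] (p : Ω → ℝ) (X : Ω → α) (Y : Ω → β) (y : β) :
    ∑ x, distOf p (fun ω => (X ω, Y ω)) (x, y) = distOf p Y y := by
  classical
  simp only [distOf_apply, Prod.mk.injEq, ite_and]
  rw [Finset.sum_comm]
  simp

end ProbabilityMassFunctions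

section Entropy

variable {Ω α β : Type*} [Fintype Ω] [Fintype α] [Fintype β]

lemma ent_eq_sum_negMulLog_div (p : α → ℝ) : ent p = (∑ a, negMulLog (p a)) / log 2 := by
  simp only [ent, logb, negMulLog, Finset.sum_div, ← Finset.sum_neg_distrib]
  exact Finset.sum_congr rfl fun a _ => by ring

lemma IsPMF.neg_mul_logb_nonneg {p : α → ℝ} (hp : IsPMF p) (a : α) :
    0 ≤ -(p a * logb 2 (p a)) :=
  neg_nonneg.2 <| mul_nonpos_of_nonneg_of_nonpos (hp.1 a)
    (logb_nonpos one_lt_two (hp.1 a) (hp.le_one a))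

lemma IsPMF.ent_nonneg {p : α → ℝ} (hp : IsPMF p) : 0 ≤ ent p := by
  rw [ent, ← Finset.sum_neg_distrib]
  exact Finset.sum_nonneg fun a _ => hp.neg_mul_logb_nonneg a

lemma ent_uniform : ent (fun _ : α => 1 / (Fintype.card α : ℝ)) = logb 2 (Fintype.card α) := by
  cases isEmpty_or_nonempty α
  · simp [ent]
  · simp [ent]

lemma IsPMF.ent_le_logb_card {p : α → ℝ} (hp : IsPMF p) : ent p ≤ logb 2 (Fintype.card α) := by
  have := hp.nonempty
  have hcard : (0 : ℝ) < Fintype.card α := by exact_mod_cast Fintype.card_pos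
  have jensen := concaveOn_negMulLog.le_map_sum (t := Finset.univ)
    (w := fun _ => (Fintype.card α : ℝ)⁻¹) (p := p) (fun _ _ => (inv_pos.2 hcard).le) (by simp)
    (fun a _ => hp.1 a)
  simp only [smul_eq_mul, ← Finset.mul_sum, hp.2, mul_one] at jensen
  rw [negMulLog, log_inv, neg_mul_neg, mul_le_mul_iff_right₀ (inv_pos.2 hcard)] at jensen
  rw [ent_eq_sum_negMulLog_div, logb]
  gcongr

lemma IsPMF.ent_mul {p : α → ℝ} {q : β → ℝ} (hp : IsPMF p) (hq : IsPMF q) :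
    ent (fun z : α × β => p z.1 * q z.2) = ent p + ent q := by
  simp only [ent_eq_sum_negMulLog_div, Fintype.sum_prod_type, negMulLog_mul,
    Finset.sum_add_distrib, ← Finset.mul_sum, ← Finset.sum_mul, hp.2, hq.2, one_mul, add_div]

lemma entRV_comp_of_injective (p : Ω → ℝ) (X : Ω → α) {e : α → β} (he : e.Injective) :
    entRV p (fun ω => e (X ω)) = entRV p X := by
  refine congrArg Neg.neg (Fintype.sum_of_injective e he _ _ (fun b hb => ?_) fun a => ?_).symm
  · rw [distOf_eq_zero_of_notMem_range p fun ⟨ω, hω⟩ => hb ⟨X ω, hω⟩, zero_mul]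
  · rw [distOf_comp_of_injective p X he]

lemma IndepRV.entRV_prodMk {p : Ω → ℝ} (hp : IsPMF p) {X : Ω → α} {Y : Ω → β}
    (h : IndepRV p X Y) : entRV p (fun ω => (X ω, Y ω)) = entRV p X + entRV p Y := by
  have hXY : distOf p (fun ω => (X ω, Y ω)) = fun z => distOf p X z.1 * distOf p Y z.2 :=
    funext fun z => h z.1 z.2
  rw [entRV, hXY, (isPMF_distOf hp X).ent_mul (isPMF_distOf hp Y), entRV, entRV]

lemma IndepRV.MI_eq_zero {p : Ω → ℝ} (hp : IsPMF p) {X : Ω → α} {Y : Ω → β}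
    (h : IndepRV p X Y) : MI p X Y = 0 := by
  rw [MI, h.entRV_prodMk hp, sub_self]

end Entropy

section UniformRandomness

variable {A B B' γ : Type*} [Fintype A] [Fintype B] {p : A → ℝ}

/-- The joint law of an `A`-valued variable with weights `p` and an independent uniform element
of `B`. -/
def prodUniform (B : Type*) [Fintype B] (p : A → ℝ) (ω : A × B) : ℝ :=
  p ω.1 / Fintype.card B

lemma sum_prodUniform_mk {A : Type*} [Nonempty B] (p : A → ℝ) (a : A) :
    ∑ b, prodUniform B p (a, b) = p a := by
  simp [prodUniform, mul_div_cancel₀]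

lemma isPMF_prodUniform [Nonempty B] (hp : IsPMF p) : IsPMF (prodUniform B p) :=
  ⟨fun ω => div_nonneg (hp.1 _) (Nat.cast_nonneg _), by
    simp only [Fintype.sum_prod_type, sum_prodUniform_mk, hp.2]⟩

lemma distOf_prodUniform_fst [Nonempty B] (p : A → ℝ) (h : A → γ) (c : γ) :
    distOf (prodUniform B p) (fun ω => h ω.1) c = distOf p h c := by
  classical
  simp only [distOf_apply, Fintype.sum_prod_type]
  refine Finset.sum_congr rfl fun a _ => ?_
  split_ifs
  exacts [sum_prodUniform_mk p a, Finset.sum_const_zero]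

/-- Masking: whatever the value of the first coordinate, a permutation depending on it keeps the
second one uniform. -/
lemma distOf_prodUniform_prodMk (p : A → ℝ) (h : A → γ) (e : A → B ≃ B') (c : γ) (b : B') :
    distOf (prodUniform B p) (fun ω => (h ω.1, e ω.1 ω.2)) (c, b) =
      distOf p h c / Fintype.card B := by
  classical
  simp only [distOf_apply, Fintype.sum_prod_type, Finset.sum_div, Prod.mk.injEq,
    ← Equiv.eq_symm_apply, ite_and, Finset.sum_ite_irrel, Finset.sum_ite_eq', Finset.mem_univ,
    if_true, Finset.sum_const_zero, ite_div, zero_div, prodUniform]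

lemma IsPMF.distOf_prodUniform_equiv (hp : IsPMF p) (e : A → B ≃ B') (b : B') :
    distOf (prodUniform B p) (fun ω => e ω.1 ω.2) b = 1 / Fintype.card B := by
  rw [← sum_distOf_prodMk_left _ Prod.fst]
  simp only [distOf_prodUniform_prodMk p (fun a => a), ← Finset.sum_div, sum_distOf, hp.2]

lemma IsPMF.indepRV_prodUniform [Nonempty B] (hp : IsPMF p) (h : A → γ) (e : A → B ≃ B') :
    IndepRV (prodUniform B p) (fun ω => h ω.1) (fun ω => e ω.1 ω.2) := fun c b => by
  rw [distOf_prodUniform_prodMk, distOf_prodUniform_fst, hp.distOf_prodUniform_equiv e,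
    mul_one_div]

lemma entRV_prodUniform_fst [Nonempty B] [Fintype γ] (p : A → ℝ) (h : A → γ) :
    entRV (prodUniform B p) (fun ω => h ω.1) = entRV p h :=
  congrArg ent (funext (distOf_prodUniform_fst p h))

lemma IsPMF.entRV_prodUniform_equiv [Fintype B'] (hp : IsPMF p) (e : A → B ≃ B') :
    entRV (prodUniform B p) (fun ω => e ω.1 ω.2) = logb 2 (Fintype.card B) := by
  obtain ⟨a⟩ := hp.nonempty
  rw [entRV, funext (hp.distOf_prodUniform_equiv e), Fintype.card_congr (e a), ent_uniform]

end UniformRandomness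

section Chebyshev

open MeasureTheory ProbabilityTheory

/-- The probability measure on a finite type whose point masses are given by `p`, through which
results on Mathlib measures are applied to real-valued weights. -/
def IsPMF.toMeasure {α : Type*} [Fintype α] [MeasurableSpace α] {p : α → ℝ} (hp : IsPMF p) :
    Measure α :=
  (PMF.ofFintype (fun a => ENNReal.ofReal (p a)) (by
    rw [← ENNReal.ofReal_sum_of_nonneg fun a _ => hp.1 a, hp.2, ENNReal.ofReal_one])).toMeasure

instance {α : Type*} [Fintype α] [MeasurableSpace α] {p : α → ℝ} (hp : IsPMF p) :
    IsProbabilityMeasure hp.toMeasure :=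
  PMF.toMeasure.isProbabilityMeasure _

lemma IsPMF.toMeasure_real_singleton {α : Type*} [Fintype α] [MeasurableSpace α]
    [MeasurableSingletonClass α] {p : α → ℝ} (hp : IsPMF p) (a : α) :
    hp.toMeasure.real {a} = p a := by
  rw [measureReal_def, toMeasure, PMF.toMeasure_apply_singleton _ _ (measurableSet_singleton a),
    PMF.ofFintype_apply, ENNReal.toReal_ofReal (hp.1 a)]

lemma IsPMF.integral_toMeasure {α : Type*} [Fintype α] [MeasurableSpace α]
    [MeasurableSingletonClass α] {p : α → ℝ} (hp : IsPMF p) (X : α → ℝ) :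
    ∫ a, X a ∂hp.toMeasure = ∑ a, p a * X a := by
  simp only [integral_fintype .of_finite, hp.toMeasure_real_singleton, smul_eq_mul]

variable {ι : Type*} {α : ι → Type*} [Fintype ι] [∀ i, Fintype (α i)] {p : ∀ i, α i → ℝ}

lemma IsPMF.pi_toMeasure_real [∀ i, MeasurableSpace (α i)] [∀ i, MeasurableSingletonClass (α i)]
    (hp : ∀ i, IsPMF (p i)) (T : Finset (∀ i, α i)) :
    (Measure.pi fun i => (hp i).toMeasure).real T = ∑ s ∈ T, ∏ i, p i (s i) := by
  rw [← sum_measureReal_singleton]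
  refine Finset.sum_congr rfl fun s _ => ?_
  rw [← Set.univ_pi_singleton, measureReal_def, Measure.pi_pi, ENNReal.toReal_prod]
  exact Finset.prod_congr rfl fun i _ => (hp i).toMeasure_real_singleton (s i)

lemma IsPMF.sum_prod_le_of_le_abs_sum [DecidableEq ι] (hp : ∀ i, IsPMF (p i))
    {X : ∀ i, α i → ℝ} (hX : ∀ i, ∑ a, p i a * X i a = 0) {c : ℝ} (hc : 0 < c) :
    ∑ s : (∀ i, α i) with c ≤ |∑ i, X i (s i)|, ∏ i, p i (s i) ≤
      (∑ i, ∑ a, p i a * X i a ^ 2) / c ^ 2 := by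
  let _ : ∀ i, MeasurableSpace (α i) := fun _ => ⊤
  have : ∀ i, MeasurableSingletonClass (α i) := fun _ => ⟨fun _ => trivial⟩
  let μ := Measure.pi fun i => (hp i).toMeasure
  let S : (∀ i, α i) → ℝ := ∑ i, fun s => X i (s i)
  have mean_eq_zero (i : ι) : ∫ a, X i a ∂(hp i).toMeasure = 0 := by
    rw [(hp i).integral_toMeasure, hX]
  have mean_sum_eq_zero : ∫ s, S s ∂μ = 0 := by
    simp only [S, Finset.sum_apply]
    rw [integral_finsetSum _ fun _ _ => .of_finite]
    refine Finset.sum_eq_zero fun i _ => ?_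
    rw [integral_comp_eval (μ := fun i => (hp i).toMeasure) (f := X i)
      (measurable_of_finite _).aestronglyMeasurable, mean_eq_zero]
  have variance_sum : Var[S; μ] = ∑ i, ∑ a, p i a * X i a ^ 2 := by
    rw [variance_sum_pi fun _ => .of_discrete]
    refine Finset.sum_congr rfl fun i _ => ?_
    rw [variance_of_integral_eq_zero (measurable_of_finite _).aemeasurable (mean_eq_zero i),
      (hp i).integral_toMeasure]
  have chebyshev := meas_ge_le_variance_div_sq (μ := μ) (X := S) .of_discrete hc
  rw [mean_sum_eq_zero] at chebyshev
  rw [← pi_toMeasure_real hp, ← variance_sum]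
  refine ENNReal.toReal_le_of_le_ofReal (div_nonneg (variance_nonneg S μ) (sq_nonneg c)) ?_
  simpa [S] using chebyshev

end Chebyshev

section TypicalSet

variable {α : Type*} [Fintype α] {p : α → ℝ} {n : ℕ} {ε : ℝ}

/-- The law of a block of `n` independent letters with weights `p`. -/
def iid (p : α → ℝ) (n : ℕ) (s : Fin n → α) : ℝ :=
  ∏ i, p (s i)

lemma isPMF_iid (hp : IsPMF p) (n : ℕ) : IsPMF (iid p n) :=
  IsPMF.pi fun _ => hp

/-- The self-information of a letter minus its mean, the entropy. -/
def centeredInfo (p : α → ℝ) (a : α) : ℝ :=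
  -logb 2 (p a) - ent p

/-- The variance of the self-information. -/
def varentropy (p : α → ℝ) : ℝ :=
  ∑ a, p a * centeredInfo p a ^ 2

lemma IsPMF.sum_mul_centeredInfo (hp : IsPMF p) : ∑ a, p a * centeredInfo p a = 0 := by
  simp only [centeredInfo, mul_sub, mul_neg, Finset.sum_sub_distrib, Finset.sum_neg_distrib,
    ← Finset.sum_mul, hp.2, one_mul, ent, sub_self]

lemma logb_iid {s : Fin n → α} (hs : iid p n s ≠ 0) :
    logb 2 (iid p n s) = -(n * ent p + ∑ i, centeredInfo p (s i)) := by
  rw [iid, logb_prod _ _ (Finset.prod_ne_zero_iff.1 hs)]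
  simp [centeredInfo, Finset.sum_sub_distrib]

/-- The weakly typical blocks: those whose probability is `2 ^ (-n H)` up to a factor
`2 ^ (± n ε)`. -/
def typicalSet (p : α → ℝ) (n : ℕ) (ε : ℝ) : Finset (Fin n → α) :=
  {s | iid p n s ∈ Set.Icc ((2 : ℝ) ^ (-(n * (ent p + ε)))) (2 ^ (-(n * (ent p - ε))))}

lemma mem_typicalSet {s : Fin n → α} :
    s ∈ typicalSet p n ε ↔
      2 ^ (-(n * (ent p + ε))) ≤ iid p n s ∧ iid p n s ≤ 2 ^ (-(n * (ent p - ε))) := by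
  simp [typicalSet]

lemma mem_typicalSet_iff_abs_le {s : Fin n → α} (hs : 0 < iid p n s) :
    s ∈ typicalSet p n ε ↔ |∑ i, centeredInfo p (s i)| ≤ n * ε := by
  rw [mem_typicalSet, ← le_logb_iff_rpow_le one_lt_two hs, ← logb_le_iff_le_rpow one_lt_two hs,
    logb_iid hs.ne', abs_le]
  constructor <;> rintro ⟨h₁, h₂⟩ <;> constructor <;> linarith

lemma IsPMF.card_typicalSet_le (hp : IsPMF p) (n : ℕ) (ε : ℝ) :
    (#(typicalSet p n ε) : ℝ) ≤ 2 ^ (n * (ent p + ε)) := by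
  have h : #(typicalSet p n ε) * (2 : ℝ) ^ (-(n * (ent p + ε))) ≤ 1 :=
    calc #(typicalSet p n ε) * (2 : ℝ) ^ (-(n * (ent p + ε)))
      _ = ∑ _s ∈ typicalSet p n ε, (2 : ℝ) ^ (-(n * (ent p + ε))) := by simp
      _ ≤ ∑ s ∈ typicalSet p n ε, iid p n s :=
        Finset.sum_le_sum fun s hs => (mem_typicalSet.1 hs).1
      _ ≤ 1 := (isPMF_iid hp n).sum_le_one _
  rwa [rpow_neg zero_le_two, ← div_eq_mul_inv, div_le_one (by positivity)] at h

lemma IsPMF.sum_compl_typicalSet_le [DecidableEq α] (hp : IsPMF p) (hn : 0 < n) (hε : 0 < ε) :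
    ∑ s ∈ (typicalSet p n ε)ᶜ, iid p n s ≤ varentropy p / (n * ε ^ 2) := by
  calc ∑ s ∈ (typicalSet p n ε)ᶜ, iid p n s
    _ = ∑ s ∈ (typicalSet p n ε)ᶜ with iid p n s ≠ 0, iid p n s :=
      (Finset.sum_filter_ne_zero _).symm
    _ ≤ ∑ s : Fin n → α with n * ε ≤ |∑ i, centeredInfo p (s i)|, iid p n s := by
      refine Finset.sum_le_sum_of_subset_of_nonneg (fun s hs => ?_)
        fun s _ _ => (isPMF_iid hp n).1 s
      obtain ⟨hs_atypical, hs_ne⟩ := Finset.mem_filter.1 hs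
      have hs_pos := ((isPMF_iid hp n).1 s).lt_of_ne' hs_ne
      rw [Finset.mem_compl, mem_typicalSet_iff_abs_le hs_pos, not_le] at hs_atypical
      simpa using hs_atypical.le
    _ ≤ (∑ _i : Fin n, varentropy p) / (n * ε) ^ 2 :=
      sum_prod_le_of_le_abs_sum (fun _ => hp) (fun _ => hp.sum_mul_centeredInfo) (by positivity)
    _ = varentropy p / (n * ε ^ 2) := by
      simp only [Finset.sum_const, Finset.card_univ, Fintype.card_fin, nsmul_eq_mul]
      field_simp

end TypicalSet

section FixedLengthCode

variable {α : Type*} {T : Finset α}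

open scoped Classical in
/-- Numbers the elements of `T` injectively and sends everything else to one last codeword. -/
def codeword (T : Finset α) (a : α) : Fin (#T + 1) :=
  if h : a ∈ T then (T.equivFin ⟨a, h⟩).castSucc else Fin.last _

/-- The decoder of `codeword`, correct on `T`. -/
def decodeword [Nonempty α] (T : Finset α) (m : Fin (#T + 1)) : α :=
  m.lastCases (Classical.arbitrary α) fun j => T.equivFin.symm j

lemma decodeword_codeword [Nonempty α] {a : α} (ha : a ∈ T) :
    decodeword T (codeword T a) = a := by
  simp [decodeword, codeword, ha]

lemma codeword_eq_codeword_iff {a b : α} (ha : a ∈ T) :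
    codeword T b = codeword T a ↔ b = a := by
  by_cases hb : b ∈ T
  · simp [codeword, ha, hb]
  · have := (Fin.castSucc_ne_last (T.equivFin ⟨a, ha⟩)).symm
    simp [codeword, ha, hb, this, (ne_of_mem_of_not_mem ha hb).symm]

variable [Fintype α] {p : α → ℝ}

lemma distOf_codeword (p : α → ℝ) {a : α} (ha : a ∈ T) :
    distOf p (codeword T) (codeword T a) = p a := by
  classical simp [distOf_apply, codeword_eq_codeword_iff ha]

lemma IsPMF.sum_decodeword_ne_le [Nonempty α] [DecidableEq α] (hp : IsPMF p) (T : Finset α) :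
    ∑ a with decodeword T (codeword T a) ≠ a, p a ≤ ∑ a ∈ Tᶜ, p a := by
  refine Finset.sum_le_sum_of_subset_of_nonneg (fun a ha => ?_) fun a _ _ => hp.1 a
  rw [Finset.mem_compl]
  exact fun haT => (Finset.mem_filter.1 ha).2 (decodeword_codeword haT)

lemma IsPMF.sum_mul_le_entRV_codeword (hp : IsPMF p) {b : ℝ} (hT : ∀ a ∈ T, p a ≤ 2 ^ (-b)) :
    (∑ a ∈ T, p a) * b ≤ entRV p (codeword T) := by
  have letter_le (a : α) (ha : a ∈ T) : p a * b ≤ -(p a * logb 2 (p a)) := by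
    rcases (hp.1 a).eq_or_lt with h | h
    · simp [← h]
    · have := (logb_le_iff_le_rpow one_lt_two h).2 (hT a ha)
      nlinarith
  have codeword_injOn : Set.InjOn (codeword T) T := fun _ _ _ hb h =>
    (codeword_eq_codeword_iff hb).1 h
  let q := distOf p (codeword T)
  calc (∑ a ∈ T, p a) * b
    _ ≤ ∑ a ∈ T, -(p a * logb 2 (p a)) := by
      rw [Finset.sum_mul]
      exact Finset.sum_le_sum letter_le
    _ = ∑ m ∈ T.image (codeword T), -(q m * logb 2 (q m)) := by
      rw [Finset.sum_image codeword_injOn]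
      exact Finset.sum_congr rfl fun a ha => by simp only [q, distOf_codeword p ha]
    _ ≤ ∑ m, -(q m * logb 2 (q m)) :=
      Finset.sum_le_univ_sum_of_nonneg (isPMF_distOf hp _).neg_mul_logb_nonneg
    _ = entRV p (codeword T) := Finset.sum_neg_distrib _

end FixedLengthCode

section SourceCoding

lemma logb_natCast_add_one_le {m : ℕ} {x : ℝ} (hx : 0 ≤ x) (hm : (m : ℝ) ≤ 2 ^ x) :
    logb 2 (m + 1) ≤ 1 + x := by
  rw [logb_le_iff_le_rpow one_lt_two (by positivity), rpow_add two_pos, rpow_one]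
  linarith [one_le_rpow one_le_two hx]

lemma tendsto_logb_floor_two_rpow_add_one_div {ℓ : ℝ} (hℓ : 0 ≤ ℓ) :
    Tendsto (fun n : ℕ => logb 2 (⌊(2 : ℝ) ^ (n * ℓ)⌋₊ + 1) / n) atTop (nhds ℓ) := by
  have upper : Tendsto (fun n : ℕ => 1 / (n : ℝ) + ℓ) atTop (nhds ℓ) := by
    simpa using tendsto_one_div_atTop_nhds_zero_nat.add (tendsto_const_nhds (x := ℓ))
  refine tendsto_const_nhds.squeeze' upper ?_ ?_ <;>
    filter_upwards [eventually_gt_atTop 0] with n hn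
  · rw [le_div_iff₀ (Nat.cast_pos.2 hn), le_logb_iff_rpow_le one_lt_two (by positivity), mul_comm]
    exact (Nat.lt_floor_add_one _).le
  · calc logb 2 (⌊(2 : ℝ) ^ (n * ℓ)⌋₊ + 1) / n
      _ ≤ (1 + n * ℓ) / n := by
        gcongr
        exact logb_natCast_add_one_le (by positivity) (Nat.floor_le (by positivity))
      _ = 1 / n + ℓ := by field_simp

variable {α : Type*} [Fintype α] {p : α → ℝ} {ε : ℕ → ℝ}

lemma IsPMF.logb_card_typicalSet_add_one_div_le (hp : IsPMF p) {n : ℕ} (hn : 0 < n) {ε : ℝ}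
    (hε : 0 ≤ ε) : logb 2 (#(typicalSet p n ε) + 1) / n ≤ 1 / n + (ent p + ε) := by
  have := hp.ent_nonneg
  calc logb 2 (#(typicalSet p n ε) + 1) / n
    _ ≤ (1 + n * (ent p + ε)) / n := by
      gcongr
      exact logb_natCast_add_one_le (by positivity) (hp.card_typicalSet_le n ε)
    _ = 1 / n + (ent p + ε) := by field_simp

lemma IsPMF.mul_le_entRV_codeword_typicalSet_div (hp : IsPMF p) {n : ℕ} (hn : 0 < n) (ε : ℝ) :
    (∑ s ∈ typicalSet p n ε, iid p n s) * (ent p - ε) ≤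
      entRV (iid p n) (codeword (typicalSet p n ε)) / n := by
  rw [le_div_iff₀ (Nat.cast_pos.2 hn), mul_assoc, mul_comm (ent p - ε)]
  exact (isPMF_iid hp n).sum_mul_le_entRV_codeword fun s hs => (mem_typicalSet.1 hs).2

lemma IsPMF.entRV_codeword_div_le (hp : IsPMF p) (n : ℕ) (T : Finset (Fin n → α)) :
    entRV (iid p n) (codeword T) / n ≤ logb 2 (#T + 1) / n := by
  gcongr
  simpa using! (isPMF_distOf (isPMF_iid hp n) (codeword T)).ent_le_logb_card

lemma IsPMF.tendsto_sum_compl_typicalSet [DecidableEq α] (hp : IsPMF p)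
    (hε_pos : ∀ᶠ n in atTop, 0 < ε n)
    (hε_sq : Tendsto (fun n : ℕ => n * ε n ^ 2) atTop atTop) :
    Tendsto (fun n => ∑ s ∈ (typicalSet p n (ε n))ᶜ, iid p n s) atTop (nhds 0) := by
  refine tendsto_const_nhds.squeeze' (hε_sq.const_div_atTop (varentropy p)) ?_ ?_
  · exact .of_forall fun n => Finset.sum_nonneg fun s _ => (isPMF_iid hp n).1 s
  · filter_upwards [eventually_gt_atTop 0, hε_pos] with n hn hεn
    exact hp.sum_compl_typicalSet_le hn hεn

lemma IsPMF.tendsto_decodeword_error [DecidableEq α] (hp : IsPMF p) [∀ n, Nonempty (Fin n → α)]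
    (hε_pos : ∀ᶠ n in atTop, 0 < ε n)
    (hε_sq : Tendsto (fun n : ℕ => n * ε n ^ 2) atTop atTop) :
    Tendsto (fun n => ∑ s with
        decodeword (typicalSet p n (ε n)) (codeword (typicalSet p n (ε n)) s) ≠ s, iid p n s)
      atTop (nhds 0) :=
  squeeze_zero (fun n => Finset.sum_nonneg fun s _ => (isPMF_iid hp n).1 s)
    (fun n => (isPMF_iid hp n).sum_decodeword_ne_le _)
    (hp.tendsto_sum_compl_typicalSet hε_pos hε_sq)

lemma tendsto_one_div_add_ent_add (p : α → ℝ) (hε_zero : Tendsto ε atTop (nhds 0)) :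
    Tendsto (fun n : ℕ => 1 / (n : ℝ) + (ent p + ε n)) atTop (nhds (ent p)) := by
  simpa using tendsto_one_div_atTop_nhds_zero_nat.add (hε_zero.const_add (ent p))

lemma IsPMF.tendsto_sum_typicalSet_mul (hp : IsPMF p) (hε_pos : ∀ᶠ n in atTop, 0 < ε n)
    (hε_zero : Tendsto ε atTop (nhds 0))
    (hε_sq : Tendsto (fun n : ℕ => n * ε n ^ 2) atTop atTop) :
    Tendsto (fun n => (∑ s ∈ typicalSet p n (ε n), iid p n s) * (ent p - ε n))
      atTop (nhds (ent p)) := by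
  classical
  have sum_eq (n : ℕ) : 1 - ∑ s ∈ (typicalSet p n (ε n))ᶜ, iid p n s =
      ∑ s ∈ typicalSet p n (ε n), iid p n s := by
    rw [← (isPMF_iid hp n).2, ← Finset.sum_add_sum_compl (typicalSet p n (ε n)),
      add_sub_cancel_right]
  simpa [sum_eq] using ((hp.tendsto_sum_compl_typicalSet hε_pos hε_sq).const_sub 1).mul
    (hε_zero.const_sub (ent p))

lemma IsPMF.tendsto_logb_card_typicalSet_add_one_div (hp : IsPMF p)
    (hε_pos : ∀ᶠ n in atTop, 0 < ε n) (hε_zero : Tendsto ε atTop (nhds 0))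
    (hε_sq : Tendsto (fun n : ℕ => n * ε n ^ 2) atTop atTop) :
    Tendsto (fun n => logb 2 (#(typicalSet p n (ε n)) + 1) / n) atTop (nhds (ent p)) := by
  refine (hp.tendsto_sum_typicalSet_mul hε_pos hε_zero hε_sq).squeeze'
    (tendsto_one_div_add_ent_add p hε_zero) ?_ ?_ <;>
    filter_upwards [eventually_gt_atTop 0, hε_pos] with n hn hεn
  · exact (hp.mul_le_entRV_codeword_typicalSet_div hn _).trans (hp.entRV_codeword_div_le n _)
  · exact hp.logb_card_typicalSet_add_one_div_le hn hεn.le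

lemma IsPMF.tendsto_entRV_codeword_div (hp : IsPMF p)
    (hε_pos : ∀ᶠ n in atTop, 0 < ε n) (hε_zero : Tendsto ε atTop (nhds 0))
    (hε_sq : Tendsto (fun n : ℕ => n * ε n ^ 2) atTop atTop) :
    Tendsto (fun n => entRV (iid p n) (codeword (typicalSet p n (ε n))) / n)
      atTop (nhds (ent p)) := by
  refine (hp.tendsto_sum_typicalSet_mul hε_pos hε_zero hε_sq).squeeze'
    (hp.tendsto_logb_card_typicalSet_add_one_div hε_pos hε_zero hε_sq) ?_ ?_
  · filter_upwards [eventually_gt_atTop 0] with n hn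
    exact hp.mul_le_entRV_codeword_typicalSet_div hn _
  · exact .of_forall fun n => hp.entRV_codeword_div_le n _

lemma exists_tendsto_zero_natCast_mul_sq_tendsto_atTop :
    ∃ ε : ℕ → ℝ, (∀ᶠ n in atTop, 0 < ε n) ∧ Tendsto ε atTop (nhds 0) ∧
      Tendsto (fun n : ℕ => n * ε n ^ 2) atTop atTop := by
  refine ⟨fun n => (n : ℝ) ^ (-(1 / 4) : ℝ), ?_, ?_, ?_⟩
  · filter_upwards [eventually_gt_atTop 0] with n hn
    positivity
  · exact (tendsto_rpow_neg_atTop (by norm_num)).comp tendsto_natCast_atTop_atTop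
  · refine ((tendsto_rpow_atTop (y := 1 / 2) (by norm_num)).comp
      tendsto_natCast_atTop_atTop).congr fun n => ?_
    rw [Function.comp_apply, ← rpow_mul_natCast n.cast_nonneg, ← rpow_one_add' n.cast_nonneg] <;>
      norm_num

open scoped Classical in
lemma IsPMF.exists_fixedLengthCode (hp : IsPMF p) :
    ∃ (m : ℕ → ℕ) (f : ∀ n, (Fin n → α) → Fin (m n + 1)) (g : ∀ n, Fin (m n + 1) → Fin n → α),
      Tendsto (fun n => ∑ s with g n (f n s) ≠ s, iid p n s) atTop (nhds 0) ∧
      Tendsto (fun n => logb 2 (m n + 1) / n) atTop (nhds (ent p)) ∧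
      Tendsto (fun n => entRV (iid p n) (f n) / n) atTop (nhds (ent p)) := by
  obtain ⟨ε, hε_pos, hε_zero, hε_sq⟩ := exists_tendsto_zero_natCast_mul_sq_tendsto_atTop
  obtain ⟨a⟩ := hp.nonempty
  have (n : ℕ) : Nonempty (Fin n → α) := ⟨fun _ => a⟩
  refine ⟨fun n => #(typicalSet p n (ε n)), fun n => codeword _, fun n => decodeword _, ?_,
    hp.tendsto_logb_card_typicalSet_add_one_div hε_pos hε_zero hε_sq,
    hp.tendsto_entRV_codeword_div hε_pos hε_zero hε_sq⟩
  convert hp.tendsto_decodeword_error hε_pos hε_sq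

end SourceCoding

section Impersonation

variable {α : Type} [Fintype α] {C : Scheme22 α} {PS : α → ℝ} {n : ℕ} {c : ℝ}

lemma nonempty_isPMF (α : Type*) [Fintype α] [Nonempty α] : Nonempty {Q : α → ℝ // IsPMF Q} := by
  classical
  exact ⟨⟨_, single_mem_stdSimplex ℝ (Classical.arbitrary α)⟩⟩

open scoped Classical in
lemma PimpX_eq_of_forall [Nonempty (C.X n)]
    (h : ∀ x, ∑ y with C.dec n (x, y) ≠ none, distOf (jp C PS n) (Yn C n) y = c) :
    PimpX C PS n = c := by
  have := nonempty_isPMF (C.X n)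
  refine (iSup_congr fun Q => ?_).trans ciSup_const
  simp only [Finset.sum_filter] at h
  simp only [AccRegion, Finset.sum_filter, Fintype.sum_prod_type, ← mul_ite_zero,
    ← Finset.mul_sum, h, ← Finset.sum_mul, Q.2.2, one_mul]

open scoped Classical in
lemma PimpY_eq_of_forall [Nonempty (C.Y n)]
    (h : ∀ y, ∑ x with C.dec n (x, y) ≠ none, distOf (jp C PS n) (Xn C n) x = c) :
    PimpY C PS n = c := by
  have := nonempty_isPMF (C.Y n)
  refine (iSup_congr fun Q => ?_).trans ciSup_const
  simp only [Finset.sum_filter] at h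
  simp only [AccRegion, Finset.sum_filter, Fintype.sum_prod_type_right, ← ite_zero_mul,
    ← Finset.sum_mul, h, ← Finset.mul_sum, Q.2.2, mul_one]

end Impersonation

section PadScheme

open scoped Classical in
/-- One-time pad with authentication: the pad and the key are drawn uniformly, one share is the pair
(pad, key), the other is (pad + message, key) for the message `f n s` encoding the secret `s`.
The decoder rejects shares with different keys. -/
def padScheme {α : Type} {M K : ℕ → Type} [∀ n, Fintype (M n)] [∀ n, AddGroup (M n)]
    [∀ n, Fintype (K n)] [∀ n, Nonempty (K n)] (f : ∀ n, (Fin n → α) → M n)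
    (g : ∀ n, M n → Fin n → α) : Scheme22 α where
  U n := M n × K n
  X n := M n × K n
  Y n := M n × K n
  fU _ := inferInstance
  fX _ := inferInstance
  fY _ := inferInstance
  neU _ := inferInstance
  enc n s u := (u, (u.1 + f n s, u.2))
  dec n xy := if xy.1.2 = xy.2.2 then some (g n (-xy.1.1 + xy.2.1)) else none

/-- Masking of a pad by the message `m`, as a permutation of the (pad, key) pairs. -/
def maskEquiv {M : Type*} [AddGroup M] (K : Type*) (m : M) : M × K ≃ M × K :=
  (Equiv.addRight m).prodCongr (.refl K)

variable {α : Type} {M K : ℕ → Type} [∀ n, Fintype (M n)] [∀ n, AddGroup (M n)]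
  [∀ n, Fintype (K n)] [∀ n, Nonempty (K n)] (f : ∀ n, (Fin n → α) → M n)
  (g : ∀ n, M n → Fin n → α)

lemma dec_padScheme_ne_none_iff {n : ℕ} {x y : M n × K n} :
    (padScheme f g).dec n (x, y) ≠ none ↔ x.2 = y.2 := by
  simp [padScheme]

variable [Fintype α] {PS : α → ℝ}

lemma IsPMF.distOf_Xn_padScheme (hPS : IsPMF PS) (n : ℕ) (x : M n × K n) :
    distOf (jp (padScheme f g) PS n) (Xn (padScheme (K := K) f g) n) x =
      1 / (Fintype.card (M n) * Fintype.card (K n)) := by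
  rw [← Nat.cast_mul, ← Fintype.card_prod]
  exact (isPMF_iid hPS n).distOf_prodUniform_equiv (fun _ => .refl _) x

lemma IsPMF.distOf_Yn_padScheme (hPS : IsPMF PS) (n : ℕ) (y : M n × K n) :
    distOf (jp (padScheme f g) PS n) (Yn (padScheme (K := K) f g) n) y =
      1 / (Fintype.card (M n) * Fintype.card (K n)) := by
  rw [← Nat.cast_mul, ← Fintype.card_prod]
  exact (isPMF_iid hPS n).distOf_prodUniform_equiv (fun s => maskEquiv (K n) (f n s)) y

lemma IsPMF.MI_Sn_Xn_padScheme (hPS : IsPMF PS) (n : ℕ) :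
    MI (jp (padScheme f g) PS n) (Sn _ n) (Xn (padScheme (K := K) f g) n) = 0 :=
  ((isPMF_iid hPS n).indepRV_prodUniform id fun _ => .refl (M n × K n)).MI_eq_zero
    (isPMF_prodUniform (isPMF_iid hPS n))

lemma IsPMF.MI_Sn_Yn_padScheme (hPS : IsPMF PS) (n : ℕ) :
    MI (jp (padScheme f g) PS n) (Sn _ n) (Yn (padScheme (K := K) f g) n) = 0 :=
  ((isPMF_iid hPS n).indepRV_prodUniform id fun s => maskEquiv (K n) (f n s)).MI_eq_zero
    (isPMF_prodUniform (isPMF_iid hPS n))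

lemma logb_card_prod (M K : Type*) [Fintype M] [Nonempty M] [Fintype K] [Nonempty K] :
    logb 2 (Fintype.card (M × K)) = logb 2 (Fintype.card M) + logb 2 (Fintype.card K) := by
  rw [Fintype.card_prod, Nat.cast_mul, logb_mul (by simp) (by simp)]

lemma shares_injective {M : Type*} [AddGroup M] (K : Type*) :
    Function.Injective fun z : M × M × K => (z.2, maskEquiv K z.1 z.2) := by
  rintro ⟨m, v, w⟩ ⟨m', v', w'⟩ h
  obtain ⟨⟨rfl, rfl⟩, hm, -⟩ : (v = v' ∧ w = w') ∧ v + m = v' + m' ∧ w = w' := by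
    simpa [maskEquiv] using h
  rw [add_left_cancel hm]

lemma IsPMF.entRV_shares_padScheme (hPS : IsPMF PS) (n : ℕ) :
    entRV (jp (padScheme f g) PS n)
        (fun ω => (Xn (padScheme (K := K) f g) n ω, Yn (padScheme f g) n ω)) =
      entRV (iid PS n) (f n) + logb 2 (Fintype.card (M n × K n)) := by
  have hp := isPMF_iid hPS n
  calc entRV (jp (padScheme f g) PS n) _
    _ = entRV (prodUniform (M n × K n) (iid PS n)) fun ω => (f n ω.1, ω.2) :=
      entRV_comp_of_injective _ (fun ω : (Fin n → α) × M n × K n => (f n ω.1, ω.2))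
        (shares_injective (K n))
    _ = entRV (prodUniform (M n × K n) (iid PS n)) (fun ω => f n ω.1) +
        entRV (prodUniform (M n × K n) (iid PS n)) (fun ω => ω.2) :=
      (hp.indepRV_prodUniform (f n) fun _ => .refl (M n × K n)).entRV_prodMk (isPMF_prodUniform hp)
    _ = entRV (iid PS n) (f n) + logb 2 (Fintype.card (M n × K n)) :=
      congrArg₂ _ (entRV_prodUniform_fst _ _) (hp.entRV_prodUniform_equiv fun _ => .refl _)

lemma IsPMF.MI_Xn_Yn_padScheme (hPS : IsPMF PS) (n : ℕ) :
    MI (jp (padScheme f g) PS n) (Xn (padScheme (K := K) f g) n) (Yn _ n) =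
      logb 2 (Fintype.card (M n)) + logb 2 (Fintype.card (K n)) - entRV (iid PS n) (f n) := by
  have hp := isPMF_iid hPS n
  have entRV_Xn : entRV (jp (padScheme f g) PS n) (Xn (padScheme (K := K) f g) n) =
      logb 2 (Fintype.card (M n × K n)) :=
    hp.entRV_prodUniform_equiv fun _ => .refl _
  have entRV_Yn : entRV (jp (padScheme f g) PS n) (Yn (padScheme (K := K) f g) n) =
      logb 2 (Fintype.card (M n × K n)) :=
    hp.entRV_prodUniform_equiv fun s => maskEquiv (K n) (f n s)
  rw [MI, hPS.entRV_shares_padScheme, entRV_Xn, entRV_Yn, logb_card_prod]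
  ring

open scoped Classical in
lemma Pe_padScheme (PS : α → ℝ) (n : ℕ) :
    Pe (padScheme (K := K) f g) PS n = ∑ s with g n (f n s) ≠ s, iid PS n s := by
  have wrong_iff (s : Fin n → α) (u : M n × K n) :
      (padScheme f g).dec n ((padScheme f g).enc n s u) ≠ some s ↔ g n (f n s) ≠ s := by
    simp [padScheme]
  calc Pe (padScheme (K := K) f g) PS n
    _ = ∑ ω : (Fin n → α) × M n × K n, if g n (f n ω.1) ≠ ω.1 then
          prodUniform (M n × K n) (iid PS n) ω else 0 := by
      rw [Pe, Finset.sum_filter]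
      exact Finset.sum_congr rfl fun ω _ => if_congr (wrong_iff ω.1 ω.2) rfl rfl
    _ = ∑ s with g n (f n s) ≠ s, iid PS n s := by
      rw [Fintype.sum_prod_type, Finset.sum_filter]
      refine Finset.sum_congr rfl fun s _ => ?_
      split_ifs
      exacts [sum_prodUniform_mk _ s, Finset.sum_const_zero]

lemma sum_snd_eq_one_div (M : Type*) {K : Type*} [Fintype M] [Nonempty M] [Fintype K]
    [DecidableEq K] (k : K) :
    ∑ z : M × K with z.2 = k, (1 : ℝ) / (Fintype.card M * Fintype.card K) =
      1 / Fintype.card K := by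
  rw [Finset.sum_filter, Fintype.sum_prod_type]
  simp only [Finset.sum_ite_eq', Finset.mem_univ, if_true, Finset.sum_const, Finset.card_univ,
    nsmul_eq_mul]
  field_simp

lemma IsPMF.PimpX_padScheme (hPS : IsPMF PS) (n : ℕ) :
    PimpX (padScheme (K := K) f g) PS n = 1 / Fintype.card (K n) := by
  classical
  have : Nonempty ((padScheme (K := K) f g).X n) := inferInstanceAs (Nonempty (M n × K n))
  refine PimpX_eq_of_forall fun x => ?_
  rw [← sum_snd_eq_one_div (M n) (Prod.snd (α := M n) x)]
  refine Finset.sum_congr (Finset.filter_congr fun y _ => ?_)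
    fun y _ => hPS.distOf_Yn_padScheme f g n y
  exact (dec_padScheme_ne_none_iff f g).trans eq_comm

lemma IsPMF.PimpY_padScheme (hPS : IsPMF PS) (n : ℕ) :
    PimpY (padScheme (K := K) f g) PS n = 1 / Fintype.card (K n) := by
  classical
  have : Nonempty ((padScheme (K := K) f g).Y n) := inferInstanceAs (Nonempty (M n × K n))
  refine PimpY_eq_of_forall fun y => ?_
  rw [← sum_snd_eq_one_div (M n) (Prod.snd (α := M n) y)]
  exact Finset.sum_congr (Finset.filter_congr fun x _ => dec_padScheme_ne_none_iff f g)
    fun x _ => hPS.distOf_Xn_padScheme f g n x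

end PadScheme

/-- direct part: for every source distribution and every
`ℓ ≥ 0`, there is a sequence of encoder/decoder pairs asymptotically realizing
a (2,2)-threshold scheme with correlation level `ℓ` whose rates are
asymptotically at most `H(S)+ℓ`, whose impersonation-success exponents are
asymptotically at least `ℓ`, and which satisfies perfect secrecy
`I(Sⁿ;Xₙ) = I(Sⁿ;Yₙ) = 0` for all `n ≥ 1`. -/
theorem statement3 {𝒮 : Type} [Fintype 𝒮] (PS : 𝒮 → ℝ) (hPS : IsPMF PS)
    (ℓ : ℝ) (hℓ : 0 ≤ ℓ) :
    ∃ C : Scheme22 𝒮, Realizes C PS ℓ ∧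
      limsup (fun n => Real.logb 2 (Fintype.card (C.X n)) / (n : ℝ)) atTop
        ≤ ent PS + ℓ ∧
      limsup (fun n => Real.logb 2 (Fintype.card (C.Y n)) / (n : ℝ)) atTop
        ≤ ent PS + ℓ ∧
      limsup (fun n => Real.logb 2 (Fintype.card (C.U n)) / (n : ℝ)) atTop
        ≤ ent PS + ℓ ∧
      ℓ ≤ liminf (fun n => min (-Real.logb 2 (PimpX C PS n) / (n : ℝ))
            (-Real.logb 2 (PimpY C PS n) / (n : ℝ))) atTop ∧
      ∀ n, 1 ≤ n →
        MI (jp C PS n) (Sn C n) (Xn C n) = 0 ∧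
        MI (jp C PS n) (Sn C n) (Yn C n) = 0 := by
  classical
  obtain ⟨m, f, g, error_tendsto, rate_tendsto, entropy_tendsto⟩ := hPS.exists_fixedLengthCode
  let K (n : ℕ) := Fin (⌊(2 : ℝ) ^ (n * ℓ)⌋₊ + 1)
  let C := padScheme (K := K) f g
  have key_rate := tendsto_logb_floor_two_rpow_add_one_div hℓ
  have share_rate : Tendsto (fun n : ℕ => logb 2 (Fintype.card (Fin (m n + 1) × K n)) / n)
      atTop (nhds (ent PS + ℓ)) := by
    simp only [logb_card_prod]
    simpa [K, add_div] using rate_tendsto.add key_rate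
  have correlation : Tendsto (fun n => MI (jp C PS n) (Xn C n) (Yn C n) / n) atTop (nhds ℓ) := by
    simpa [C, K, hPS.MI_Xn_Yn_padScheme, add_div, sub_div] using
      (rate_tendsto.add key_rate).sub entropy_tendsto
  have exponent : Tendsto (fun n => min (-logb 2 (PimpX C PS n) / (n : ℝ))
      (-logb 2 (PimpY C PS n) / (n : ℝ))) atTop (nhds ℓ) := by
    simpa [C, K, hPS.PimpX_padScheme, hPS.PimpY_padScheme] using key_rate
  refine ⟨C, ⟨?_, ?_, ?_, correlation⟩, share_rate.limsup_eq.le, share_rate.limsup_eq.le,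
    share_rate.limsup_eq.le, exponent.liminf_eq.ge, fun n _ =>
      ⟨hPS.MI_Sn_Xn_padScheme f g n, hPS.MI_Sn_Yn_padScheme f g n⟩⟩
  · simpa [C, Pe_padScheme] using error_tendsto
  · simp [C, hPS.MI_Sn_Xn_padScheme]
  · simp [C, hPS.MI_Sn_Yn_padScheme]
end
end

section
/- Let X and Y be random variables taking values in finite sets 𝒳 and 𝒴 with joint distribution P_{XY} and marginals P_X, P_Y, and let A ⊆ 𝒳 × 𝒴. Put α = Σ_{(x,y)∉A} P_{XY}(x,y) (the error probability of the first kind) and β = Σ_{(x,y)∈A} P_X(x)P_Y(y) (the error probability of the second kind). If β > 0, then I(X;Y) ≥ −h(α) − (1−α) log₂ β, where h(p) = −p log₂ p − (1−p) log₂(1−p) is the binary entropy function. -/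
open Finset Filter Real
open scoped BigOperators

noncomputable section

/-- The `𝒳`-marginal of a joint distribution on `𝒳 × 𝒴`. -/
def margX {𝒳 𝒴 : Type*} [Fintype 𝒴] (q : 𝒳 × 𝒴 → ℝ) : 𝒳 → ℝ :=
  fun x => ∑ y, q (x, y)

/-- The `𝒴`-marginal of a joint distribution on `𝒳 × 𝒴`. -/
def margY {𝒳 𝒴 : Type*} [Fintype 𝒳] (q : 𝒳 × 𝒴 → ℝ) : 𝒴 → ℝ :=
  fun y => ∑ x, q (x, y)

/-- Base-2 mutual information of a joint distribution on `𝒳 × 𝒴`. -/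
def miDist {𝒳 𝒴 : Type*} [Fintype 𝒳] [Fintype 𝒴] (q : 𝒳 × 𝒴 → ℝ) : ℝ :=
  ent (margX q) + ent (margY q) - ent q

/-- The binary entropy function `h(a) = −a log₂ a − (1−a) log₂ (1−a)`. -/
def binEnt (a : ℝ) : ℝ :=
  -(a * Real.logb 2 a) - (1 - a) * Real.logb 2 (1 - a)

/-!
Mutual information is the relative entropy `D(P_{XY} ‖ P_X × P_Y)`. By the log-sum inequality
(Jensen for `x log x`), merging the outcomes into `A` and `Aᶜ` does not increase relative entropy,
so `I(X;Y) ≥ (1 - α) log₂ ((1 - α) / β) + α log₂ (α / (1 - β))`. The two numerators contribute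
`-h(α)`, and `-α log₂ (1 - β)` is nonnegative and may be dropped.
-/

section LogSum

variable {ι : Type*} {s : Finset ι} {p q : ι → ℝ}

theorem mul_logb_div_eq_sub {b x y : ℝ} (h : y = 0 → x = 0) :
    x * logb b (x / y) = x * logb b x - x * logb b y := by
  rcases eq_or_ne x 0 with rfl | hx
  · simp
  · rw [logb_div hx (mt h hx), mul_sub]

theorem sum_eq_zero_of_dominated (hq : ∀ i ∈ s, 0 ≤ q i)
    (hpq : ∀ i ∈ s, q i = 0 → p i = 0) (h : ∑ i ∈ s, q i = 0) : ∑ i ∈ s, p i = 0 :=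
  sum_eq_zero fun i hi => hpq i hi ((sum_eq_zero_iff_of_nonneg hq).1 h i hi)

theorem sum_mul_log_sum_div_sum_le (hp : ∀ i ∈ s, 0 ≤ p i) (hq : ∀ i ∈ s, 0 ≤ q i)
    (hpq : ∀ i ∈ s, q i = 0 → p i = 0) :
    (∑ i ∈ s, p i) * log ((∑ i ∈ s, p i) / ∑ i ∈ s, q i) ≤
      ∑ i ∈ s, p i * log (p i / q i) := by
  rcases (sum_nonneg hq).eq_or_lt with hQ | hQ
  · have hp0 : ∀ i ∈ s, p i = 0 := fun i hi =>
      hpq i hi ((sum_eq_zero_iff_of_nonneg hq).1 hQ.symm i hi)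
    rw [sum_eq_zero hp0, zero_mul, sum_eq_zero fun i hi => by rw [hp0 i hi, zero_mul]]
  have hratio : ∀ i ∈ s, q i * (p i / q i) = p i := fun i hi => mul_div_cancel_of_imp' (hpq i hi)
  have jensen := convexOn_mul_log.map_centerMass_le hq hQ fun i hi => div_nonneg (hp i hi) (hq i hi)
  simp only [centerMass, smul_eq_mul, Function.comp_apply, ← mul_assoc] at jensen
  rw [sum_congr rfl hratio, sum_congr rfl fun i hi => congrArg (· * _) (hratio i hi),
    mul_assoc, mul_le_mul_iff_right₀ (inv_pos.2 hQ), inv_mul_eq_div] at jensen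
  exact jensen

theorem sum_mul_logb_sum_div_sum_le {b : ℝ} (hb : 1 < b) (hp : ∀ i ∈ s, 0 ≤ p i)
    (hq : ∀ i ∈ s, 0 ≤ q i) (hpq : ∀ i ∈ s, q i = 0 → p i = 0) :
    (∑ i ∈ s, p i) * logb b ((∑ i ∈ s, p i) / ∑ i ∈ s, q i) ≤
      ∑ i ∈ s, p i * logb b (p i / q i) := by
  simp only [logb, ← mul_div_assoc, ← sum_div]
  exact div_le_div_of_nonneg_right (sum_mul_log_sum_div_sum_le hp hq hpq) (log_pos hb).le

end LogSum

namespace IsPMF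

theorem one_sub_sum_compl {ι : Type*} [Fintype ι] [DecidableEq ι] {p : ι → ℝ} (hp : IsPMF p)
    (A : Finset ι) : 1 - ∑ i ∈ Aᶜ, p i = ∑ i ∈ A, p i := by
  rw [← hp.2, ← sum_add_sum_compl A, add_sub_cancel_right]

theorem sum_le_one_s7 {ι : Type*} [Fintype ι] {p : ι → ℝ} (hp : IsPMF p) (A : Finset ι) :
    ∑ i ∈ A, p i ≤ 1 :=
  hp.2 ▸ sum_le_univ_sum_of_nonneg hp.1

theorem prod {𝒳 𝒴 : Type*} [Fintype 𝒳] [Fintype 𝒴] {p : 𝒳 → ℝ} {q : 𝒴 → ℝ}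
    (hp : IsPMF p) (hq : IsPMF q) : IsPMF fun z : 𝒳 × 𝒴 => p z.1 * q z.2 :=
  ⟨fun z => mul_nonneg (hp.1 z.1) (hq.1 z.2), by
    rw [Fintype.sum_prod_type, ← sum_mul_sum, hp.2, hq.2, one_mul]⟩

end IsPMF

section RelativeEntropy

variable {ι : Type*} [Fintype ι] {p q : ι → ℝ}

/-- Base-2 relative entropy (Kullback–Leibler divergence) `D(p ‖ q)` on a finite type. The
conventions for division and `Real.logb` make terms with `q i = 0` vanish, so this is the usual
divergence only when `q i = 0` implies `p i = 0`. -/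
def relEnt (p q : ι → ℝ) : ℝ :=
  ∑ i, p i * logb 2 (p i / q i)

theorem sum_mul_logb_add_sum_compl_mul_logb_le_relEnt [DecidableEq ι] (hp : ∀ i, 0 ≤ p i)
    (hq : ∀ i, 0 ≤ q i) (hpq : ∀ i, q i = 0 → p i = 0) (A : Finset ι) :
    (∑ i ∈ A, p i) * logb 2 ((∑ i ∈ A, p i) / ∑ i ∈ A, q i) +
      (∑ i ∈ Aᶜ, p i) * logb 2 ((∑ i ∈ Aᶜ, p i) / ∑ i ∈ Aᶜ, q i) ≤ relEnt p q := by
  have logSum (s : Finset ι) := sum_mul_logb_sum_div_sum_le (s := s) one_lt_two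
    (fun i _ => hp i) (fun i _ => hq i) fun i _ => hpq i
  rw [relEnt, ← sum_add_sum_compl A]
  exact add_le_add (logSum A) (logSum Aᶜ)

theorem neg_binEnt_sub_mul_logb_le_relEnt [DecidableEq ι] (hp : IsPMF p) (hq : IsPMF q)
    (hpq : ∀ i, q i = 0 → p i = 0) (A : Finset ι) :
    -binEnt (∑ i ∈ Aᶜ, p i) - (1 - ∑ i ∈ Aᶜ, p i) * logb 2 (∑ i ∈ A, q i) ≤ relEnt p q := by
  have hsplit (s : Finset ι) := mul_logb_div_eq_sub (b := 2)
    (sum_eq_zero_of_dominated (s := s) (fun i _ => hq.1 i) fun i _ => hpq i)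
  have hdrop : (∑ i ∈ Aᶜ, p i) * logb 2 (∑ i ∈ Aᶜ, q i) ≤ 0 :=
    mul_nonpos_of_nonneg_of_nonpos (sum_nonneg fun i _ => hp.1 i)
      (logb_nonpos one_lt_two (sum_nonneg fun i _ => hq.1 i) (hq.sum_le_one_s7 Aᶜ))
  have hmerge := sum_mul_logb_add_sum_compl_mul_logb_le_relEnt hp.1 hq.1 hpq A
  rw [hsplit A, hsplit Aᶜ] at hmerge
  rw [binEnt, hp.one_sub_sum_compl]
  linarith

end RelativeEntropy

section Marginals

variable {𝒳 𝒴 : Type*} {p : 𝒳 × 𝒴 → ℝ}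

theorem sum_margX_mul [Fintype 𝒳] [Fintype 𝒴] (q : 𝒳 × 𝒴 → ℝ) (f : 𝒳 → ℝ) :
    ∑ x, margX q x * f x = ∑ z, q z * f z.1 := by
  simp only [margX, sum_mul, Fintype.sum_prod_type]

theorem sum_margY_mul [Fintype 𝒳] [Fintype 𝒴] (q : 𝒳 × 𝒴 → ℝ) (f : 𝒴 → ℝ) :
    ∑ y, margY q y * f y = ∑ z, q z * f z.2 := by
  simp only [margY, sum_mul, Fintype.sum_prod_type_right]

theorem eq_zero_of_margX_eq_zero [Fintype 𝒴] (hp : ∀ z, 0 ≤ p z) {z : 𝒳 × 𝒴}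
    (h : margX p z.1 = 0) : p z = 0 :=
  (sum_eq_zero_iff_of_nonneg fun y _ => hp (z.1, y)).1 h z.2 (mem_univ _)

theorem eq_zero_of_margY_eq_zero [Fintype 𝒳] (hp : ∀ z, 0 ≤ p z) {z : 𝒳 × 𝒴}
    (h : margY p z.2 = 0) : p z = 0 :=
  (sum_eq_zero_iff_of_nonneg fun x _ => hp (x, z.2)).1 h z.1 (mem_univ _)

theorem eq_zero_of_margX_mul_margY_eq_zero [Fintype 𝒳] [Fintype 𝒴] (hp : ∀ z, 0 ≤ p z)
    {z : 𝒳 × 𝒴} (h : margX p z.1 * margY p z.2 = 0) : p z = 0 :=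
  (mul_eq_zero.1 h).elim (eq_zero_of_margX_eq_zero hp) (eq_zero_of_margY_eq_zero hp)

theorem IsPMF.margX [Fintype 𝒳] [Fintype 𝒴] (hp : IsPMF p) : IsPMF (margX p) :=
  ⟨fun x => sum_nonneg fun y _ => hp.1 (x, y), by simpa [hp.2] using sum_margX_mul p 1⟩

theorem IsPMF.margY [Fintype 𝒳] [Fintype 𝒴] (hp : IsPMF p) : IsPMF (margY p) :=
  ⟨fun y => sum_nonneg fun x _ => hp.1 (x, y), by simpa [hp.2] using sum_margY_mul p 1⟩

theorem miDist_eq_relEnt [Fintype 𝒳] [Fintype 𝒴] (hp : ∀ z, 0 ≤ p z) :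
    miDist p = relEnt p fun z => margX p z.1 * margY p z.2 := by
  have hterm (z : 𝒳 × 𝒴) : p z * logb 2 (p z / (margX p z.1 * margY p z.2)) =
      p z * logb 2 (p z) - p z * logb 2 (margX p z.1) - p z * logb 2 (margY p z.2) := by
    rcases eq_or_ne (p z) 0 with hz | hz
    · simp [hz]
    · have hX : margX p z.1 ≠ 0 := mt (eq_zero_of_margX_eq_zero hp) hz
      have hY : margY p z.2 ≠ 0 := mt (eq_zero_of_margY_eq_zero hp) hz
      rw [logb_div hz (mul_ne_zero hX hY), logb_mul hX hY]
      ring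
  simp only [relEnt, hterm, sum_sub_distrib, miDist, ent, sum_margX_mul, sum_margY_mul]
  ring

end Marginals

open scoped Classical in
/-- hypothesis-testing bound: for a joint distribution
`P_{XY}` with marginals `P_X, P_Y` and an acceptance region `A`, with
first-kind error `α = P_{XY}(Aᶜ)` and second-kind error `β = (P_X×P_Y)(A)`,
if `β > 0` then `I(X;Y) ≥ −h(α) − (1−α) log₂ β`. -/
theorem statement7 {𝒳 𝒴 : Type} [Fintype 𝒳] [Fintype 𝒴]
    (PXY : 𝒳 × 𝒴 → ℝ) (hPXY : IsPMF PXY) (A : Finset (𝒳 × 𝒴)) (α β : ℝ)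
    (hα : α = ∑ xy ∈ Aᶜ, PXY xy)
    (hβ : β = ∑ xy ∈ A, margX PXY xy.1 * margY PXY xy.2)
    (hβpos : 0 < β) :
    -binEnt α - (1 - α) * Real.logb 2 β ≤ miDist PXY := by
  subst hα hβ
  rw [miDist_eq_relEnt hPXY.1]
  exact neg_binEnt_sub_mul_logb_le_relEnt hPXY (hPXY.margX.prod hPXY.margY)
    (fun _ => eq_zero_of_margX_mul_margY_eq_zero hPXY.1) A
end
end
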